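/- Let (X,‖·‖) be a real normed space with X ≠ {0}, and let ⟦·,·⟧ be a weak pairing on X compatible with the norm satisfying the straight angle property ⟦−x,x⟧ = −‖x‖² for all x. Let A : X → X be a bounded linear operator and μ(A) a real number such that (‖Id+hA‖−1)/h → μ(A) as h → 0⁺ (operator norm). Then Lumer's equality holds: μ(A) = sup{ ⟦Ax,x⟧ : x ∈ X, ‖x‖ = 1 }. -/

import Mathlib

open Filter Topology MeasureTheory

/-- A weak pairing on a real vector space `X`. -/
structure WeakPairing (X : Type*) [AddCommGroup X] [Module ℝ X] where
  pair : X → X → ℝ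
  subadd : ∀ x₁ x₂ y : X, pair (x₁ + x₂) y ≤ pair x₁ y + pair x₂ y
  smul_left : ∀ (α : ℝ), 0 ≤ α → ∀ x y : X, pair (α • x) y = α * pair x y
  smul_right : ∀ (α : ℝ), 0 ≤ α → ∀ x y : X, pair x (α • y) = α * pair x y
  neg_neg_eq : ∀ x y : X, pair (-x) (-y) = pair x y
  pos_def : ∀ x : X, x ≠ 0 → 0 < pair x x
  cauchy_schwarz : ∀ x y : X, pair x y ≤ Real.sqrt (pair x x * pair y y)

/-!
For a compatible weak pairing, subadditivity and the Cauchy-Schwarz inequality give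
`(‖x‖ - ‖x - y‖) ‖x‖ ≤ ⟦y, x⟧`, and the straight angle property gives
`⟦y, x⟧ ≤ (‖x + y‖ - ‖x‖) ‖x‖`. With `y = h • A x` and `‖x‖ = 1`, the second estimate yields
`⟦A x, x⟧ ≤ (‖Id + hA‖ - 1) / h`, hence `⟦A x, x⟧ ≤ μ`. If `s` bounds all `⟦A x, x⟧` on the unit
sphere, the first estimate shows that `Id - hA` expands norms by at least `1 - hs`, so
`(1 - hs) ‖Id + hA‖ ≤ ‖(Id - hA)(Id + hA)‖ = ‖Id - h²A²‖ ≤ 1 + h² ‖A‖²`.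
Comparing first-order terms in `h` gives `μ ≤ s`.
-/

section OperatorNorm

variable {𝕜 E F G : Type*} [NontriviallyNormedField 𝕜] [SeminormedAddCommGroup E]
  [SeminormedAddCommGroup F] [SeminormedAddCommGroup G] [NormedSpace 𝕜 E] [NormedSpace 𝕜 F]
  [NormedSpace 𝕜 G]

theorem mul_opNorm_le_opNorm_comp {c : ℝ} (C : F →L[𝕜] G) (hC : ∀ y, c * ‖y‖ ≤ ‖C y‖)
    (B : E →L[𝕜] F) : c * ‖B‖ ≤ ‖C.comp B‖ := by
  rcases le_or_gt c 0 with hc | hc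
  · exact (mul_nonpos_of_nonpos_of_nonneg hc (norm_nonneg B)).trans (norm_nonneg _)
  · rw [mul_comm, ← le_div_iff₀ hc]
    refine B.opNorm_le_bound (by positivity) fun x => ?_
    rw [div_mul_eq_mul_div, le_div_iff₀ hc, mul_comm]
    exact (hC (B x)).trans ((C.comp B).le_opNorm x)

theorem opNorm_id_sub_comp_id_add_le (T : E →L[𝕜] E) :
    ‖(ContinuousLinearMap.id 𝕜 E - T).comp (ContinuousLinearMap.id 𝕜 E + T)‖ ≤ 1 + ‖T‖ ^ 2 := by
  have hfactor : (ContinuousLinearMap.id 𝕜 E - T).comp (ContinuousLinearMap.id 𝕜 E + T)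
      = ContinuousLinearMap.id 𝕜 E - T.comp T := by
    simpa only [ContinuousLinearMap.one_def, ContinuousLinearMap.mul_def,
      ContinuousLinearMap.comp_id] using
      (Commute.one_left T).mul_self_sub_mul_self_eq'.symm
  calc _ ≤ ‖ContinuousLinearMap.id 𝕜 E‖ + ‖T.comp T‖ := hfactor ▸ norm_sub_le _ _
    _ ≤ 1 + ‖T‖ * ‖T‖ :=
        add_le_add ContinuousLinearMap.norm_id_le (ContinuousLinearMap.opNorm_comp_le _ _)
    _ = 1 + ‖T‖ ^ 2 := by rw [pow_two]

end OperatorNorm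

theorem mul_norm_le_norm_apply_of_unit_norm {E F : Type*} [SeminormedAddCommGroup E]
    [NormedSpace ℝ E] [SeminormedAddCommGroup F] [NormedSpace ℝ F] {c : ℝ}
    (B : E →ₗ[ℝ] F) (hB : ∀ x, ‖x‖ = 1 → c ≤ ‖B x‖) (x : E) : c * ‖x‖ ≤ ‖B x‖ := by
  rcases (norm_nonneg x).eq_or_lt with hx | hx
  · simp [← hx]
  · have hunit : ‖‖x‖⁻¹ • x‖ = 1 := by
      rw [norm_smul, norm_inv, norm_norm, inv_mul_cancel₀ hx.ne']
    have hscaled := hB _ hunit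
    rwa [map_smul, norm_smul, norm_inv, norm_norm, inv_mul_eq_div, le_div_iff₀ hx] at hscaled

section LogNorm

variable {E : Type*} [SeminormedAddCommGroup E] [NormedSpace ℝ E] {A : E →L[ℝ] E} {μ : ℝ}

/-- `μ` is the logarithmic norm of `A`, the limit of `(‖Id + hA‖ - 1) / h` as `h → 0⁺`.
It is a relation, so that existence of the limit is part of the assertion. -/
def HasLogNorm (A : E →L[ℝ] E) (μ : ℝ) : Prop :=
  Tendsto (fun h : ℝ => (‖ContinuousLinearMap.id ℝ E + h • A‖ - 1) / h) (𝓝[>] 0) (𝓝 μ)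

theorem HasLogNorm.le_of_forall_unit_norm_le {s : ℝ} (hμ : HasLogNorm A μ)
    (hs : ∀ᶠ h : ℝ in 𝓝[>] 0, ∀ x, ‖x‖ = 1 → 1 - h * s ≤ ‖x - h • A x‖) : μ ≤ s := by
  have hid : Tendsto (fun h : ℝ => h) (𝓝[>] 0) (𝓝 0) := tendsto_id.mono_left nhdsWithin_le_nhds
  have hlhs : Tendsto (fun h : ℝ =>
      (1 - h * s) * ((‖ContinuousLinearMap.id ℝ E + h • A‖ - 1) / h)) (𝓝[>] 0) (𝓝 μ) := by
    simpa using ((hid.mul_const s).const_sub 1).mul hμ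
  have hrhs : Tendsto (fun h : ℝ => s + h * ‖A‖ ^ 2) (𝓝[>] 0) (𝓝 s) := by
    simpa using (hid.mul_const (‖A‖ ^ 2)).const_add s
  refine le_of_tendsto_of_tendsto hlhs hrhs ?_
  filter_upwards [hs, self_mem_nhdsWithin] with h hs (hpos : 0 < h)
  have hexpand : ∀ x, (1 - h * s) * ‖x‖ ≤ ‖(ContinuousLinearMap.id ℝ E - h • A) x‖ :=
    mul_norm_le_norm_apply_of_unit_norm (ContinuousLinearMap.id ℝ E - h • A).toLinearMap hs
  have hnorm : (1 - h * s) * ‖ContinuousLinearMap.id ℝ E + h • A‖ ≤ 1 + h ^ 2 * ‖A‖ ^ 2 := by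
    simpa only [norm_smul, Real.norm_of_nonneg hpos.le, mul_pow] using
      (mul_opNorm_le_opNorm_comp _ hexpand _).trans (opNorm_id_sub_comp_id_add_le (h • A))
  rw [← mul_div_assoc, div_le_iff₀ hpos]
  linarith

end LogNorm

namespace WeakPairing

variable {X : Type*} [NormedAddCommGroup X] [NormedSpace ℝ X] {P : WeakPairing X}

/-- Compatibility of a weak pairing with the norm: `⟦x, x⟧ = ‖x‖²`. -/
def IsCompatible (P : WeakPairing X) : Prop :=
  ∀ x, P.pair x x = ‖x‖ ^ 2

/-- The straight angle property of a weak pairing, `⟦-x, x⟧ = -‖x‖²`: opposite vectors pair as in an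
inner product space. -/
def HasStraightAngle (P : WeakPairing X) : Prop :=
  ∀ x, P.pair (-x) x = -‖x‖ ^ 2

theorem IsCompatible.pair_le_norm_mul_norm (hP : P.IsCompatible) (x y : X) :
    P.pair x y ≤ ‖x‖ * ‖y‖ := by
  calc P.pair x y ≤ √(P.pair x x * P.pair y y) := P.cauchy_schwarz x y
    _ = ‖x‖ * ‖y‖ := by rw [hP x, hP y, ← mul_pow, Real.sqrt_sq (by positivity)]

theorem IsCompatible.norm_sub_norm_sub_mul_norm_le_pair (hP : P.IsCompatible) (x y : X) :
    (‖x‖ - ‖x - y‖) * ‖x‖ ≤ P.pair y x := by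
  have hsubadd : ‖x‖ ^ 2 ≤ P.pair (x - y) x + P.pair y x := by
    simpa only [sub_add_cancel, hP x] using P.subadd (x - y) y x
  linarith [hP.pair_le_norm_mul_norm (x - y) x]

theorem HasStraightAngle.pair_le_norm_add_sub_norm_mul_norm (hstraight : P.HasStraightAngle)
    (hP : P.IsCompatible) (x y : X) : P.pair y x ≤ (‖x + y‖ - ‖x‖) * ‖x‖ := by
  have hsubadd : P.pair y x ≤ P.pair (x + y) x + -‖x‖ ^ 2 := by
    simpa only [add_neg_cancel_comm, hstraight x] using P.subadd (x + y) (-x) x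
  linarith [hP.pair_le_norm_mul_norm (x + y) x]

variable {A : X →L[ℝ] X} {μ : ℝ}

theorem HasStraightAngle.pair_apply_self_le (hstraight : P.HasStraightAngle)
    (hP : P.IsCompatible) (hμ : HasLogNorm A μ) (x : X) : P.pair (A x) x ≤ μ * ‖x‖ ^ 2 := by
  refine ge_of_tendsto (hμ.mul_const (‖x‖ ^ 2)) ?_
  filter_upwards [self_mem_nhdsWithin] with h (hpos : 0 < h)
  rw [div_mul_eq_mul_div, le_div_iff₀ hpos]
  calc P.pair (A x) x * h = P.pair (h • A x) x := by rw [P.smul_left h hpos.le, mul_comm]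
    _ ≤ (‖x + h • A x‖ - ‖x‖) * ‖x‖ := hstraight.pair_le_norm_add_sub_norm_mul_norm hP x _
    _ ≤ (‖ContinuousLinearMap.id ℝ X + h • A‖ * ‖x‖ - ‖x‖) * ‖x‖ := by
        gcongr
        exact (ContinuousLinearMap.id ℝ X + h • A).le_opNorm x
    _ = (‖ContinuousLinearMap.id ℝ X + h • A‖ - 1) * ‖x‖ ^ 2 := by ring

theorem IsCompatible.logNorm_le (hP : P.IsCompatible) (hμ : HasLogNorm A μ) {s : ℝ}
    (hs : ∀ x, ‖x‖ = 1 → P.pair (A x) x ≤ s) : μ ≤ s := by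
  refine hμ.le_of_forall_unit_norm_le ?_
  filter_upwards [self_mem_nhdsWithin] with h (hpos : 0 < h) x hx
  have hlower : 1 - ‖x - h • A x‖ ≤ h * P.pair (A x) x := by
    simpa only [hx, mul_one, P.smul_left h hpos.le] using
      hP.norm_sub_norm_sub_mul_norm_le_pair x (h • A x)
  linarith [mul_le_mul_of_nonneg_left (hs x hx) hpos.le]

theorem HasStraightAngle.isLUB_pair_apply_self (hstraight : P.HasStraightAngle)
    (hP : P.IsCompatible) (hμ : HasLogNorm A μ) :
    IsLUB {r : ℝ | ∃ x : X, ‖x‖ = 1 ∧ r = P.pair (A x) x} μ := by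
  refine ⟨?_, fun s hs => hP.logNorm_le hμ fun x hx => hs ⟨x, hx, rfl⟩⟩
  rintro _ ⟨x, hx, rfl⟩
  simpa only [hx, one_pow, mul_one] using hstraight.pair_apply_self_le hP hμ x

end WeakPairing

/-- Lumer's equality for a weak pairing compatible with the
norm and satisfying the straight angle property (a regular pairing). -/
theorem lumer_equality_of_straight_angle
    (X : Type*) [NormedAddCommGroup X] [NormedSpace ℝ X] [Nontrivial X]
    (P : WeakPairing X) (hcompat : ∀ x : X, P.pair x x = ‖x‖ ^ 2)
    (hstraight : ∀ x : X, P.pair (-x) x = -‖x‖ ^ 2)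
    (A : X →L[ℝ] X) (μ : ℝ)
    (hμ : Tendsto (fun h : ℝ => (‖ContinuousLinearMap.id ℝ X + h • A‖ - 1) / h)
      (𝓝[>] (0:ℝ)) (𝓝 μ)) :
    μ = sSup {r : ℝ | ∃ x : X, ‖x‖ = 1 ∧ r = P.pair (A x) x} := by
  obtain ⟨x, hx⟩ := exists_norm_eq X zero_le_one
  have hlub := WeakPairing.HasStraightAngle.isLUB_pair_apply_self hstraight hcompat hμ
  exact (hlub.csSup_eq ⟨_, x, hx, rfl⟩).symm
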